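/- arXiv:2601.10197 — 2 statements merged into one kernel-verified Lean document; each statement's English description precedes it below -/
import Mathlib

section
/- Let d ≥ 4 be an integer and let A be any d×d complex matrix. Then the entrywise (Bochner) integral over the Haar probability measure on U(d) satisfies ∫_{U(d)} (UᵀU) A (UᵀU)† dμ(U) = (tr(A)·I_d + Aᵀ)/(d+1), where Uᵀ is the transpose and (UᵀU)† the conjugate transpose of UᵀU. -/
/-!
Write `S = UᵀU`, a symmetric unitary matrix. Everything follows from the second moments
`E[S i j * conj (S k l)] = (δ_ik δ_jl + δ_il δ_jk) / (d + 1)`.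

The unitary group is compact, so its Haar probability measure is also right invariant
(`integral_comp_mul_right_unitary`), and the substitution `U ↦ U V` turns `S` into `Vᵀ S V`. This is
used for two families of matrices `V` only:

* the diagonal matrix with one entry `Complex.I` and all others `1`, which makes a moment vanish
  unless the index pairs `{i, j}` and `{k, l}` agree as multisets (`moment_eq_zero`);
* the reflection `1 - (2/5) u uᵀ` with `u = e_i + 2 e_j`, whose `i`-th column is
  `(3/5) e_i - (4/5) e_j`. Comparing `E|S i i|²` before and after it, and the same with `i` and
  `j` exchanged, gives `E|S i i|² = E|S j j|² = 2 E|S i j|²` (`moment_relation`).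

Since the rows of `S` are unit vectors, `∑ j, E|S i j|² = 1`, which fixes the remaining constant.
-/

open MeasureTheory Matrix

/-- The entrywise (product) measurable structure on matrices. -/
instance matrixMeasurableSpace {m n α : Type*} [MeasurableSpace α] :
    MeasurableSpace (Matrix m n α) :=
  (inferInstance : MeasurableSpace (m → n → α))

local notation "𝕌" d:max => Matrix.unitaryGroup (Fin d) ℂ

instance matrixBorelSpace (d : ℕ) : BorelSpace (Matrix (Fin d) (Fin d) ℂ) :=
  inferInstanceAs (BorelSpace (Fin d → Fin d → ℂ))

instance unitaryCompactSpace (d : ℕ) : CompactSpace (𝕌 d) := by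
  rw [← isCompact_univ_iff, Subtype.isCompact_iff, Set.image_univ, Subtype.range_coe]
  have hK : IsCompact (X := Matrix (Fin d) (Fin d) ℂ)
      (Set.univ.pi fun _ : Fin d => Set.univ.pi fun _ : Fin d => Metric.closedBall (0 : ℂ) 1) :=
    isCompact_univ_pi fun _ => isCompact_univ_pi fun _ => isCompact_closedBall 0 1
  refine hK.of_isClosed_subset (isClosed_unitary (R := Matrix (Fin d) (Fin d) ℂ)) ?_
  intro U hU i _ j _
  simpa using entry_norm_bound_of_unitary hU i j

/-- The right translate of `μ` is again a Haar probability measure, hence equal to `μ`. -/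
theorem integral_comp_mul_right_unitary {d : ℕ} (μ : Measure (𝕌 d))
    [μ.IsHaarMeasure] [IsProbabilityMeasure μ] (f : 𝕌 d → ℂ) (V : 𝕌 d) :
    ∫ U, f (U * V) ∂μ = ∫ U, f U ∂μ := by
  have : μ.IsMulRightInvariant := by
    refine ⟨fun g => ?_⟩
    have : IsProbabilityMeasure (μ.map (· * g)) :=
      Measure.isProbabilityMeasure_map (measurable_mul_const g).aemeasurable
    exact Measure.isHaarMeasure_eq_of_isProbabilityMeasure _ _
  exact integral_mul_right_eq_self f V

/-- The symmetric unitary matrix `UᵀU`. -/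
def symU {d : ℕ} (U : 𝕌 d) : Matrix (Fin d) (Fin d) ℂ :=
  (U : Matrix (Fin d) (Fin d) ℂ)ᵀ * (U : Matrix (Fin d) (Fin d) ℂ)

/-- The second moment `E[S i j * conj (S k l)]` of `S = UᵀU`. -/
noncomputable def moment {d : ℕ} (μ : Measure (𝕌 d)) (i j k l : Fin d) : ℂ :=
  ∫ U, symU U i j * star (symU U k l) ∂μ

theorem symU_symm {d : ℕ} (U : 𝕌 d) (i j : Fin d) : symU U i j = symU U j i := by
  have h : (symU U)ᵀ = symU U := by simp [symU, Matrix.transpose_mul]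
  rw [← h, Matrix.transpose_apply, h]

theorem symU_mul {d : ℕ} (U V : 𝕌 d) :
    symU (U * V) = (V : Matrix (Fin d) (Fin d) ℂ)ᵀ * symU U * V := by
  simp [symU, Matrix.transpose_mul, Matrix.mul_assoc]

theorem symU_mul_conjTranspose {d : ℕ} (U : 𝕌 d) : symU U * (symU U)ᴴ = 1 := by
  have h1 : (U : Matrix (Fin d) (Fin d) ℂ) * (U : Matrix (Fin d) (Fin d) ℂ)ᴴ = 1 :=
    Unitary.mul_star_self_of_mem U.2
  have h2 : (U : Matrix (Fin d) (Fin d) ℂ)ᵀ * (U : Matrix (Fin d) (Fin d) ℂ)ᵀᴴ = 1 := by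
    have h3 : (U : Matrix (Fin d) (Fin d) ℂ)ᴴ * (U : Matrix (Fin d) (Fin d) ℂ) = 1 :=
      Unitary.star_mul_self_of_mem U.2
    have h4 := congrArg Matrix.transpose h3
    rw [Matrix.transpose_mul, Matrix.transpose_one] at h4
    exact h4
  rw [symU, Matrix.conjTranspose_mul, Matrix.mul_assoc,
    ← Matrix.mul_assoc (U : Matrix (Fin d) (Fin d) ℂ), h1, Matrix.one_mul, h2]

theorem continuous_symU {d : ℕ} (i j : Fin d) : Continuous fun U : 𝕌 d => symU U i j := by
  have : Continuous fun U : 𝕌 d => symU U :=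
    (continuous_subtype_val.matrix_transpose).mul continuous_subtype_val
  exact this.matrix_elem i j

theorem integrable_symU {d : ℕ} (μ : Measure (𝕌 d)) [IsProbabilityMeasure μ]
    (i j k l : Fin d) : Integrable (fun U => symU U i j * star (symU U k l)) μ :=
  ((continuous_symU i j).mul (continuous_symU k l).star).integrable_of_hasCompactSupport
    (HasCompactSupport.of_compactSpace _)

theorem moment_swap_left {d : ℕ} (μ : Measure (𝕌 d)) (i j k l : Fin d) :
    moment μ i j k l = moment μ j i k l := by
  simp only [moment, symU_symm _ i j]

theorem moment_swap_right {d : ℕ} (μ : Measure (𝕌 d)) (i j k l : Fin d) :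
    moment μ i j k l = moment μ i j l k := by
  simp only [moment, symU_symm _ k l]

theorem moment_conj {d : ℕ} (μ : Measure (𝕌 d)) [μ.IsHaarMeasure] [IsProbabilityMeasure μ]
    (V : 𝕌 d) (i j k l : Fin d) :
    moment μ i j k l = ∫ U, ((V : Matrix (Fin d) (Fin d) ℂ)ᵀ * symU U * V) i j *
      star (((V : Matrix (Fin d) (Fin d) ℂ)ᵀ * symU U * V) k l) ∂μ := by
  simp only [← symU_mul]
  exact (integral_comp_mul_right_unitary μ (fun U => symU U i j * star (symU U k l)) V).symm

/-- Invariance of the moments under a diagonal matrix of phases `I` (at `m`) and `1`. -/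
theorem moment_phase {d : ℕ} (μ : Measure (𝕌 d)) [μ.IsHaarMeasure] [IsProbabilityMeasure μ]
    (m i j k l : Fin d) :
    moment μ i j k l =
      ((if i = m then Complex.I else 1) * (if j = m then Complex.I else 1) *
        star ((if k = m then Complex.I else 1) * (if l = m then Complex.I else 1))) *
        moment μ i j k l := by
  have hV : Matrix.diagonal (fun a : Fin d => if a = m then Complex.I else 1) ∈ 𝕌 d := by
    rw [Matrix.mem_unitaryGroup_iff, Matrix.star_eq_conjTranspose, Matrix.diagonal_conjTranspose,
      Matrix.diagonal_mul_diagonal, ← Matrix.diagonal_one]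
    congr 1
    ext a
    by_cases h : a = m <;> simp [h]
  conv_lhs => rw [moment_conj μ ⟨_, hV⟩]
  rw [moment, ← integral_const_mul]
  congr 1
  ext U
  simp only [Matrix.diagonal_transpose, Matrix.mul_diagonal, Matrix.diagonal_mul, star_mul']
  ring

theorem moment_eq_zero {d : ℕ} (μ : Measure (𝕌 d)) [μ.IsHaarMeasure] [IsProbabilityMeasure μ]
    {i j k l : Fin d} (h : ¬ ((i = k ∧ j = l) ∨ (i = l ∧ j = k))) :
    moment μ i j k l = 0 := by
  have hI : Complex.I ≠ 1 := fun h => by simpa using congrArg Complex.re h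
  have hI2 : (-1 : ℂ) ≠ 1 := by norm_num
  have key : ∀ (c : ℂ) (i j k l : Fin d), c ≠ 1 → moment μ i j k l = c * moment μ i j k l →
      moment μ i j k l = 0 := by
    intro c i j k l hc h
    have : (c - 1) * moment μ i j k l = 0 := by linear_combination -h
    exact (mul_eq_zero.mp this).resolve_left (sub_ne_zero.mpr hc)
  -- An index not occurring in `{k, l}` produces the phase `I` or `I ^ 2 = -1`.
  have h1 : ∀ i j k l : Fin d, i ≠ k → i ≠ l → moment μ i j k l = 0 := by
    intro i j k l hk hl
    refine key _ _ _ _ _ ?_ (moment_phase μ i i j k l)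
    by_cases hj : j = i <;> simp [hj, hk.symm, hl.symm, hI, hI2]
  -- An index of multiplicity two against one produces the phase `I ^ 2 * conj I = I`.
  have h2 : ∀ i l : Fin d, l ≠ i → moment μ i i i l = 0 := by
    intro i l hl
    refine key _ _ _ _ _ ?_ (moment_phase μ i i i i l)
    simp [hl, hI]
  by_cases hi : i ≠ k ∧ i ≠ l
  · exact h1 _ _ _ _ hi.1 hi.2
  by_cases hj : j ≠ k ∧ j ≠ l
  · rw [moment_swap_left]
    exact h1 _ _ _ _ hj.1 hj.2
  by_cases hik : i = k
  · subst hik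
    obtain rfl : j = i := by tauto
    exact h2 _ _ fun hl => h (Or.inl ⟨rfl, hl.symm⟩)
  · obtain rfl : i = l := by tauto
    obtain rfl : j = i := by tauto
    rw [moment_swap_right]
    exact h2 _ _ (Ne.symm hik)

/-- The effect of the reflection `1 - (2/5) u uᵀ`, `u = e_i + 2 e_j`, on `E|S i i|²`; the cross
terms vanish by `moment_eq_zero`. -/
theorem moment_reflect {d : ℕ} (μ : Measure (𝕌 d)) [μ.IsHaarMeasure] [IsProbabilityMeasure μ]
    {i j : Fin d} (hij : i ≠ j) :
    625 * moment μ i i i i =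
      81 * moment μ i i i i + 256 * moment μ j j j j + 576 * moment μ i j i j := by
  set u : Fin d → ℂ := Pi.single i 1 + Pi.single j 2 with hu
  set M : Matrix (Fin d) (Fin d) ℂ := 1 - (2 / 5 : ℂ) • vecMulVec u u with hM
  have huu : u ⬝ᵥ u = 5 := by
    simp [hu, hij, hij.symm]
    norm_num
  have hMT : Mᵀ = M := by
    simp [hM, Matrix.transpose_vecMulVec]
  have hMs : Mᴴ = M := by
    have : star u = u := by
      ext a
      simp only [hu, Pi.star_apply, Pi.add_apply, Pi.single_apply]
      split_ifs <;> simp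
    simp [hM, Matrix.conjTranspose_vecMulVec, this]
  have hMM : M * M = 1 := by
    have : vecMulVec u u * vecMulVec u u = (5 : ℂ) • vecMulVec u u := by
      rw [Matrix.vecMulVec_mul_vecMulVec, huu]
      ext; simp [vecMulVec_apply]; ring
    simp only [hM, sub_mul, mul_sub, one_mul, mul_one, smul_mul_assoc, mul_smul_comm, this]
    module
  have hV : M ∈ 𝕌 d := by
    rw [Matrix.mem_unitaryGroup_iff, Matrix.star_eq_conjTranspose, hMs, hMM]
  have hcol : ∀ a, M a i = if a = i then 3 / 5 else if a = j then -4 / 5 else 0 := by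
    intro a
    by_cases h1 : a = i
    · subst h1
      simp [hM, hu, vecMulVec_apply, hij]
      norm_num
    · by_cases h2 : a = j
      · subst h2
        simp [hM, hu, vecMulVec_apply, hij, hij.symm]
        norm_num
      · simp [hM, hu, vecMulVec_apply, h1, h2]
  have hentry : ∀ U : 𝕌 d, (Mᵀ * symU U * M) i i =
      9 / 25 * symU U i i + 16 / 25 * symU U j j - 24 / 25 * symU U i j := by
    intro U
    have hf : ∀ f : Fin d → ℂ, ∑ a, M a i * f a = 3 / 5 * f i - 4 / 5 * f j := by
      intro f
      have : ∀ a, M a i * f a = (if a = i then 3 / 5 * f i else 0) +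
          (if a = j then -4 / 5 * f j else 0) := by
        intro a
        rw [hcol]
        by_cases h1 : a = i
        · subst h1; simp [hij]
        · by_cases h2 : a = j
          · subst h2; simp [h1]
          · simp [h1, h2]
      simp only [this, Finset.sum_add_distrib, Finset.sum_ite_eq',
        Finset.mem_univ, if_true]
      ring
    simp only [Matrix.mul_apply, Matrix.transpose_apply, hf]
    simp only [mul_comm _ (M _ i), hf]
    rw [symU_symm U j i]
    ring
  have hz : ∀ p q r s : Fin d, ¬ ((p = r ∧ q = s) ∨ (p = s ∧ q = r)) →
      ∫ U, symU U p q * star (symU U r s) ∂μ = 0 := fun p q r s h => moment_eq_zero μ h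
  have hexp := moment_conj μ ⟨M, hV⟩ i i i i
  simp only [hentry] at hexp
  have hpt : ∀ U : 𝕌 d,
      (9 / 25 * symU U i i + 16 / 25 * symU U j j - 24 / 25 * symU U i j) *
        star (9 / 25 * symU U i i + 16 / 25 * symU U j j - 24 / 25 * symU U i j) =
      81 / 625 * (symU U i i * star (symU U i i)) + 256 / 625 * (symU U j j * star (symU U j j)) +
      576 / 625 * (symU U i j * star (symU U i j)) +
      144 / 625 * (symU U i i * star (symU U j j)) + 144 / 625 * (symU U j j * star (symU U i i)) +
      (-216 / 625) * (symU U i i * star (symU U i j)) +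
      (-216 / 625) * (symU U i j * star (symU U i i)) +
      (-384 / 625) * (symU U j j * star (symU U i j)) +
      (-384 / 625) * (symU U i j * star (symU U j j)) := by
    intro U
    simp only [star_add, star_sub, star_mul', star_div₀, star_ofNat]
    ring
  have I := fun (c : ℂ) (p q r s : Fin d) => (integrable_symU μ p q r s).const_mul c
  simp only [hpt] at hexp
  rw [integral_add, integral_add, integral_add, integral_add, integral_add, integral_add,
    integral_add, integral_add] at hexp
  · simp only [integral_const_mul] at hexp
    rw [hz i i j j (by tauto), hz j j i i (by tauto), hz i i i j (by tauto), hz i j i i (by tauto),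
      hz j j i j (by tauto), hz i j j j (by tauto)] at hexp
    simp only [moment] at hexp ⊢
    linear_combination 625 * hexp
  all_goals
    first
    | exact I _ _ _ _ _
    | (repeat' refine Integrable.add ?_ ?_) <;> exact I _ _ _ _ _

/-- Averaging the identity that the rows of `UᵀU` are unit vectors. -/
theorem sum_moment {d : ℕ} (μ : Measure (𝕌 d)) [IsProbabilityMeasure μ]
    (i : Fin d) : ∑ j, moment μ i j i j = 1 := by
  simp only [moment]
  rw [← integral_finsetSum _ fun j _ => integrable_symU μ i j i j]
  have : ∀ U : 𝕌 d, ∑ j, symU U i j * star (symU U i j) = 1 := by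
    intro U
    have := congrFun (congrFun (symU_mul_conjTranspose U) i) i
    simpa [Matrix.mul_apply] using this
  simp only [this, integral_const, probReal_univ, one_smul]

theorem moment_relation {d : ℕ} (μ : Measure (𝕌 d)) [μ.IsHaarMeasure] [IsProbabilityMeasure μ]
    {i j : Fin d} (hij : i ≠ j) : moment μ i i i i = 2 * moment μ i j i j := by
  have h1 := moment_reflect μ hij
  have h2 := moment_reflect μ hij.symm
  rw [moment_swap_left μ j i, moment_swap_right μ i j j i] at h2
  linear_combination (544 / 230400 : ℂ) * h1 + (256 / 230400 : ℂ) * h2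

theorem moment_diag {d : ℕ} (μ : Measure (𝕌 d)) [μ.IsHaarMeasure] [IsProbabilityMeasure μ]
    (i : Fin d) : moment μ i i i i = 2 / ((d : ℂ) + 1) := by
  have h := sum_moment μ i
  have h2 : ∀ j, moment μ i j i j =
      moment μ i i i i / 2 + if j = i then moment μ i i i i / 2 else 0 := by
    intro j
    by_cases hj : j = i
    · subst hj; simp
    · rw [moment_relation μ (Ne.symm hj)]; simp [hj]
  rw [Finset.sum_congr rfl fun j _ => h2 j] at h
  simp only [Finset.sum_add_distrib, Finset.sum_ite_eq', Finset.mem_univ, if_true,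
    Finset.sum_const, Finset.card_univ, Fintype.card_fin, nsmul_eq_mul] at h
  have hd : (d : ℂ) + 1 ≠ 0 := by exact_mod_cast Nat.succ_ne_zero d
  rw [eq_div_iff hd]
  linear_combination 2 * h

theorem moment_eq {d : ℕ} (μ : Measure (𝕌 d)) [μ.IsHaarMeasure] [IsProbabilityMeasure μ]
    (i j k l : Fin d) : moment μ i j k l =
      ((d : ℂ) + 1)⁻¹ * ((if i = k ∧ j = l then 1 else 0) + if i = l ∧ j = k then 1 else 0) := by
  by_cases h : (i = k ∧ j = l) ∨ (i = l ∧ j = k)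
  · by_cases hij : i = j
    · subst hij
      obtain ⟨rfl, rfl⟩ : i = k ∧ i = l := by tauto
      rw [moment_diag]
      simp
      ring
    · have hb : moment μ i j i j = ((d : ℂ) + 1)⁻¹ := by
        have := moment_relation μ hij
        rw [moment_diag] at this
        linear_combination -this / 2
      rcases h with ⟨rfl, rfl⟩ | ⟨rfl, rfl⟩
      · simp [hb, hij]
      · rw [moment_swap_right, hb]
        simp [hij]
  · rw [moment_eq_zero μ h]
    rw [not_or] at h
    simp [h.1, h.2]

/-- For any `d × d` complex matrix `A` (`d ≥ 4`), the entrywise Haar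
average over `U(d)` of `(UᵀU) A (UᵀU)†` equals `(tr(A)·𝟙 + Aᵀ)/(d+1)`. -/
theorem haar_unitary_AI_twirl
    (d : ℕ) (hd : 4 ≤ d) (A : Matrix (Fin d) (Fin d) ℂ)
    (μ : Measure (Matrix.unitaryGroup (Fin d) ℂ))
    [μ.IsHaarMeasure] [IsProbabilityMeasure μ]
    (i j : Fin d) :
    (∫ U : Matrix.unitaryGroup (Fin d) ℂ,
        (((U : Matrix (Fin d) (Fin d) ℂ)ᵀ * (U : Matrix (Fin d) (Fin d) ℂ)) * A *
          ((U : Matrix (Fin d) (Fin d) ℂ)ᵀ * (U : Matrix (Fin d) (Fin d) ℂ))ᴴ) i j ∂μ)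
      = ((((d : ℂ) + 1)⁻¹ • (A.trace • (1 : Matrix (Fin d) (Fin d) ℂ) + Aᵀ)) i j) := by
  have hpt : ∀ U : 𝕌 d, (symU U * A * (symU U)ᴴ) i j =
      ∑ l, ∑ k, A k l * (symU U i k * star (symU U j l)) := by
    intro U
    simp only [Matrix.mul_apply, Finset.sum_mul, Matrix.conjTranspose_apply]
    exact Finset.sum_congr rfl fun l _ => Finset.sum_congr rfl fun k _ => by ring
  change ∫ U : 𝕌 d, (symU U * A * (symU U)ᴴ) i j ∂μ = _
  simp only [hpt]
  rw [integral_finsetSum _ fun l _ => integrable_finsetSum _ fun k _ =>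
    (integrable_symU μ i k j l).const_mul _]
  have hl : ∀ l, ∫ U : 𝕌 d, ∑ k, A k l * (symU U i k * star (symU U j l)) ∂μ =
      ∑ k, A k l * moment μ i k j l := by
    intro l
    rw [integral_finsetSum _ fun k _ => (integrable_symU μ i k j l).const_mul _]
    exact Finset.sum_congr rfl fun k _ => integral_const_mul _ _
  simp only [hl, moment_eq]
  by_cases hij : i = j
  · subst hij
    simp only [mul_add, Finset.sum_add_distrib]
    simp [ite_and, Matrix.trace, Finset.mul_sum, mul_comm, mul_add]
  · simp [ite_and, hij, mul_comm]
end

section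
/- For every integer d ≥ 4, ∫₀¹ |d·v − 1| · v^{−1/2}·(1−v)^{(d−3)/2} dv = (4/√d)·(1 − 1/d)^{(d−1)/2}. -/
/-!
The kernel has the elementary primitive `F v = 2 v^{1/2} (1-v)^{(d-1)/2}`, in the sense that
`F' v = (1 - d v) v^{-1/2} (1-v)^{(d-3)/2}` on `(0,1)`. Hence the integrand is `F'` on `(0, 1/d)`
and `-F'` on `(1/d, 1)`, and since `F 0 = F 1 = 0` the integral equals `2 F (1/d)`.
Integrability on each piece is automatic: a nonnegative derivative of a function continuous up to
the endpoints is integrable.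
-/

/-- The function `2 v^{1/2} (1-v)^{(d-1)/2}`, a primitive of the signed kernel. -/
noncomputable def betaPrimitive (d v : ℝ) : ℝ :=
  2 * (v ^ ((1 : ℝ) / 2) * (1 - v) ^ ((d - 1) / 2))

lemma continuous_betaPrimitive {d : ℝ} (hd : 1 ≤ d) : Continuous (betaPrimitive d) := by
  unfold betaPrimitive
  refine continuous_const.mul (Continuous.mul ?_ ?_)
  · exact Real.continuous_rpow_const (by norm_num)
  · exact (Real.continuous_rpow_const (by linarith)).comp (continuous_const.sub continuous_id)

lemma hasDerivAt_betaPrimitive (d : ℝ) {v : ℝ} (h0 : 0 < v) (h1 : v < 1) :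
    HasDerivAt (betaPrimitive d)
      ((1 - d * v) * (v ^ (-(1 : ℝ) / 2) * (1 - v) ^ ((d - 3) / 2))) v := by
  have hv : 0 < 1 - v := by linarith
  have hA := (hasDerivAt_id v).rpow_const (p := (1 : ℝ) / 2) (Or.inl h0.ne')
  have hB := ((hasDerivAt_id v).const_sub 1).rpow_const (p := (d - 1) / 2) (Or.inl hv.ne')
  refine ((hA.mul hB).const_mul 2).congr_deriv ?_
  have e1 : v ^ ((1 : ℝ) / 2) = v ^ (-(1 : ℝ) / 2) * v := by
    rw [← Real.rpow_add_one h0.ne']; norm_num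
  have e2 : (1 - v) ^ ((d - 1) / 2) = (1 - v) ^ ((d - 3) / 2) * (1 - v) := by
    rw [← Real.rpow_add_one hv.ne']; congr 1; ring
  have e3 : (1 : ℝ) / 2 - 1 = -1 / 2 := by norm_num
  have e4 : (d - 1) / 2 - 1 = (d - 3) / 2 := by ring
  simp only [id, e3, e4, e1, e2]
  ring

/-- The fundamental theorem of calculus for a nonnegative derivative, where integrability of the
derivative need not be assumed. -/
lemma integral_of_nonneg_deriv {f g : ℝ → ℝ} {a b : ℝ} (hab : a ≤ b) (hc : Continuous g)
    (hd : ∀ x ∈ Set.Ioo a b, HasDerivAt g (f x) x) (hf : ∀ x ∈ Set.Ioo a b, 0 ≤ f x) :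
    IntervalIntegrable f MeasureTheory.volume a b ∧ ∫ x in a..b, f x = g b - g a := by
  have hi : IntervalIntegrable f MeasureTheory.volume a b := by
    apply intervalIntegral.intervalIntegrable_deriv_of_nonneg (g := g) hc.continuousOn
    · rwa [min_eq_left hab, max_eq_right hab]
    · rwa [min_eq_left hab, max_eq_right hab]
  exact ⟨hi, intervalIntegral.integral_eq_sub_of_hasDerivAt_of_le hab hc.continuousOn hd hi⟩

/-- For every integer `d ≥ 4`,
`∫₀¹ |d·v − 1| · v^{−1/2}(1−v)^{(d−3)/2} dv = (4/√d)(1 − 1/d)^{(d−1)/2}`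
(Lebesgue integral over `(0,1)`). -/
theorem beta_half_abs_moment_kernel (d : ℕ) (hd : 4 ≤ d) :
    (∫ v in Set.Ioo (0 : ℝ) 1,
        |(d : ℝ) * v - 1| * (v ^ (-(1 : ℝ) / 2) * (1 - v) ^ (((d : ℝ) - 3) / 2)))
      = (4 / Real.sqrt d) * (1 - 1 / (d : ℝ)) ^ (((d : ℝ) - 1) / 2) := by
  have hd4 : (4 : ℝ) ≤ d := by exact_mod_cast hd
  generalize (d : ℝ) = D at hd4 ⊢
  have hD : 0 < D := by linarith
  have hc0 : 0 < 1 / D := by positivity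
  have hc1 : 1 / D < 1 := by rw [div_lt_one hD]; linarith
  have hcont := continuous_betaPrimitive (d := D) (by linarith)
  have nonneg : ∀ v : ℝ, 0 < v → v < 1 →
      0 ≤ |D * v - 1| * (v ^ (-(1 : ℝ) / 2) * (1 - v) ^ ((D - 3) / 2)) := fun v h0 h1 =>
    mul_nonneg (abs_nonneg _)
      (mul_nonneg (Real.rpow_nonneg h0.le _) (Real.rpow_nonneg (by linarith) _))
  obtain ⟨i1, I1⟩ := integral_of_nonneg_deriv
    (f := fun v => |D * v - 1| * (v ^ (-(1 : ℝ) / 2) * (1 - v) ^ ((D - 3) / 2)))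
    hc0.le hcont
    (fun v hv => by
      have h : D * v < 1 := by have := hv.2; rw [lt_div_iff₀ hD] at this; linarith
      simp only [abs_of_neg (sub_neg.2 h), neg_sub]
      exact hasDerivAt_betaPrimitive D hv.1 (hv.2.trans hc1))
    (fun v hv => nonneg v hv.1 (hv.2.trans hc1))
  obtain ⟨i2, I2⟩ := integral_of_nonneg_deriv
    (f := fun v => |D * v - 1| * (v ^ (-(1 : ℝ) / 2) * (1 - v) ^ ((D - 3) / 2)))
    hc1.le hcont.neg
    (fun v hv => by
      have h : 1 < D * v := by have := hv.1; rw [div_lt_iff₀ hD] at this; linarith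
      simp only [abs_of_pos (sub_pos.2 h)]
      exact (hasDerivAt_betaPrimitive D (hc0.trans hv.1) hv.2).neg.congr_deriv (by ring))
    (fun v hv => nonneg v (hc0.trans hv.1) hv.2)
  rw [← MeasureTheory.integral_Ioc_eq_integral_Ioo, ← intervalIntegral.integral_of_le zero_le_one,
    ← intervalIntegral.integral_add_adjacent_intervals i1 i2, I1, I2]
  have z0 : betaPrimitive D 0 = 0 := by
    simp [betaPrimitive]
  have z1 : betaPrimitive D 1 = 0 := by
    have : (D - 1) / 2 ≠ 0 := by linarith
    simp [betaPrimitive, Real.zero_rpow this]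
  have hs : (1 / D) ^ ((1 : ℝ) / 2) = 1 / Real.sqrt D := by
    rw [← Real.sqrt_eq_rpow, Real.sqrt_div zero_le_one, Real.sqrt_one]
  simp only [Pi.neg_apply, z0, z1]
  rw [betaPrimitive, hs]
  ring
end
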